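/- Let n ∈ ℕ and let g_1, …, g_n ∈ G. Then for every X ∈ L^1 the inf-convolution of the adjusted Expected Shortfalls satisfies (□_{i=1}^n ES^{g_i})(X) ≥ ES^{g_1+⋯+g_n}(X). -/

import Mathlib

open MeasureTheory Set Filter

variable {Ω : Type*} [MeasurableSpace Ω]

/-- An atomless probability space: every set of positive measure has a subset of
strictly smaller positive measure. -/
def Atomless (μ : Measure Ω) : Prop :=
  ∀ A : Set Ω, MeasurableSet A → 0 < μ A →
    ∃ B : Set Ω, MeasurableSet B ∧ B ⊆ A ∧ 0 < μ B ∧ μ B < μ A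

/-- Value at Risk at level `p`: the left `p`-quantile for `p ∈ (0,1]`, the essential
infimum for `p = 0`.  Values are extended reals. -/
noncomputable def VaR (μ : Measure Ω) (X : Ω → ℝ) (p : ℝ) : EReal :=
  if p = 0 then essInf (fun ω => (X ω : EReal)) μ
  else sInf ((fun x : ℝ => (x : EReal)) '' {x : ℝ | ENNReal.ofReal p ≤ μ {ω | X ω ≤ x}})

/-- Real-valued version of the left `p`-quantile, used as the integrand of ES. -/
noncomputable def VaRr (μ : Measure Ω) (X : Ω → ℝ) (p : ℝ) : ℝ :=
  sInf {x : ℝ | ENNReal.ofReal p ≤ μ {ω | X ω ≤ x}}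

/-- Expected Shortfall at level `p`: `(1/(1-p)) ∫_p^1 VaR_q(X) dq` for `p ∈ [0,1)`,
the essential supremum for `p = 1`. -/
noncomputable def ES (μ : Measure Ω) (X : Ω → ℝ) (p : ℝ) : EReal :=
  if p = 1 then essSup (fun ω => (X ω : EReal)) μ
  else (((1 - p)⁻¹ * ∫ q in Set.Ioo p 1, VaRr μ X q : ℝ) : EReal)

/-- The `g`-adjusted Expected Shortfall, `sup_{p ∈ [0,1]} (ES_p(X) - g(p))`.
Note that in `EReal` one has `⊤ - ⊤ = ⊥`, matching the convention `∞ - ∞ = -∞`. -/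
noncomputable def adjES (μ : Measure Ω) (g : ℝ → EReal) (X : Ω → ℝ) : EReal :=
  ⨆ p ∈ Set.Icc (0:ℝ) 1, (ES μ X p - g p)

/-- The class `𝒢` of risk profiles: increasing functions `[0,1] → (-∞,∞]` that are
not identically `∞`. -/
def IsRiskProfile (g : ℝ → EReal) : Prop :=
  MonotoneOn g (Set.Icc (0:ℝ) 1) ∧ (∀ p ∈ Set.Icc (0:ℝ) 1, g p ≠ ⊥) ∧
    ∃ p ∈ Set.Icc (0:ℝ) 1, g p ≠ ⊤

/-- Second-order stochastic dominance: `SSD μ X Y` means `X ≥_SSD Y`, i.e. every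
risk-averse agent prefers `X` to `Y` (positive values are losses). -/
def SSD (μ : Measure Ω) (X Y : Ω → ℝ) : Prop :=
  ∀ u : ℝ → ℝ, Monotone u → ConcaveOn ℝ Set.univ u →
    ∫ ω, u (-(Y ω)) ∂μ ≤ ∫ ω, u (-(X ω)) ∂μ

/-- The inf-convolution of the functionals `ρ_1, …, ρ_n`. -/
noncomputable def infConv (μ : Measure Ω) {n : ℕ} (ρ : Fin n → ((Ω → ℝ) → EReal))
    (X : Ω → ℝ) : EReal :=
  ⨅ (Y : Fin n → Ω → ℝ) (_ : (∀ i, Integrable (Y i) μ) ∧ ∀ ω, (∑ i, Y i ω) = X ω),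
    ∑ i, ρ i (Y i)

/-- The class `𝒢_VaR`: risk profiles finite on `[0,1)`, left-continuous on `[0,1]`
and right-continuous at `0`. -/
def GVaRProfile (g : ℝ → EReal) : Prop :=
  IsRiskProfile g ∧ (∀ p ∈ Set.Ico (0:ℝ) 1, g p ≠ ⊤) ∧
    (∀ p ∈ Set.Ioc (0:ℝ) 1, Filter.Tendsto g (nhdsWithin p (Set.Ico 0 p)) (nhds (g p))) ∧
    Filter.Tendsto g (nhdsWithin 0 (Set.Ioc 0 1)) (nhds (g 0))

/-- The class `𝒢_ES`: profiles in `𝒢_VaR` such that `h_g(p) = (1-p)g(p)` is concave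
on `(0,1)` and left-continuous at `1` (with `h_g(1) = 0` by the convention `0·∞ = 0`). -/
def GESProfile (g : ℝ → EReal) : Prop :=
  GVaRProfile g ∧ ConcaveOn ℝ (Set.Ioo (0:ℝ) 1) (fun p => (1 - p) * (g p).toReal) ∧
    Filter.Tendsto (fun p => (1 - p) * (g p).toReal) (nhdsWithin 1 (Set.Ico (0:ℝ) 1)) (nhds 0)

/-!
For a probability measure `μ` and integrable `X`, the upper tail integral of the quantile function
has the Rockafellar–Uryasev representation
`∫_p^1 VaR_q(X) dq = min_x {(1 - p) x + E[(X - x)⁺]}`, with minimum attained at `x = VaR_p(X)`.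
Taking `x = ∑ i, VaR_p(Y i)` for `X = ∑ i, Y i` and using that `t ↦ t⁺` is subadditive gives the
subadditivity of `ES_p`. Subtracting `∑ i, g i p` and bounding each term `ES_p(Y i) - g i p` by its
supremum over `p` proves the inequality for every decomposition of `X`.
-/

section Order

lemma le_apply_csInf_setOf_le {α β : Type*} [ConditionallyCompleteLinearOrder α]
    [TopologicalSpace α] [OrderTopology α] [Preorder β] [TopologicalSpace β] [ClosedIciTopology β]
    {f : α → β} {b : β} (hne : {x | b ≤ f x}.Nonempty) (hbdd : BddBelow {x | b ≤ f x})
    (hf : ContinuousWithinAt f (Ici (sInf {x | b ≤ f x})) (sInf {x | b ≤ f x})) :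
    b ≤ f (sInf {x | b ≤ f x}) :=
  ge_of_tendsto_of_frequently hf ((isGLB_csInf hne hbdd).frequently_mem hne)

lemma max_sum_zero_le {ι M : Type*} [AddCommMonoid M] [LinearOrder M] [IsOrderedAddMonoid M]
    (s : Finset ι) (f : ι → M) : max (∑ i ∈ s, f i) 0 ≤ ∑ i ∈ s, max (f i) 0 :=
  max_le (Finset.sum_le_sum fun _ _ => le_max_left _ _)
    (Finset.sum_nonneg fun _ _ => le_max_right _ _)

lemma essSup_sum_le {ι α β : Type*} [MeasurableSpace α] [CompleteLinearOrder β]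
    [TopologicalSpace β] [FirstCountableTopology β] [OrderTopology β] [AddCommMonoid β]
    [IsOrderedAddMonoid β] (μ : Measure α) (s : Finset ι) (f : ι → α → β) :
    essSup (fun a => ∑ i ∈ s, f i a) μ ≤ ∑ i ∈ s, essSup (f i) μ := by
  have hle : ∀ᵐ a ∂μ, ∀ i ∈ s, f i a ≤ essSup (f i) μ :=
    (eventually_all_finset s).2 fun _ _ => ae_le_essSup
  exact essSup_le_of_ae_le _ (hle.mono fun _ ha => Finset.sum_le_sum ha)

end Order

section EReal

variable {ι : Type*} (s : Finset ι)

lemma ereal_coe_sum (f : ι → ℝ) : ((∑ i ∈ s, f i : ℝ) : EReal) = ∑ i ∈ s, (f i : EReal) :=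
  map_sum (⟨⟨Real.toEReal, EReal.coe_zero⟩, EReal.coe_add⟩ : ℝ →+ EReal) f s

lemma ereal_neg_sum {f : ι → EReal} (hf : ∀ i ∈ s, f i ≠ ⊥) :
    -∑ i ∈ s, f i = ∑ i ∈ s, -f i := by
  induction s using Finset.cons_induction with
  | empty => simp
  | cons a s ha ih =>
    obtain ⟨hfa, hfs⟩ := Finset.forall_mem_cons ha _ |>.1 hf
    have hsum : ∑ i ∈ s, f i ≠ ⊥ := fun h =>
      let ⟨i, hi, hfi⟩ := WithBot.sum_eq_bot_iff.1 h
      hfs i hi hfi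
    rw [Finset.sum_cons, Finset.sum_cons, EReal.neg_add (.inl hfa) (.inr hsum), sub_eq_add_neg,
      ih hfs]

lemma ereal_sum_sub_distrib (a : ι → EReal) {b : ι → EReal} (hb : ∀ i ∈ s, b i ≠ ⊥) :
    ∑ i ∈ s, (a i - b i) = ∑ i ∈ s, a i - ∑ i ∈ s, b i := by
  simp only [sub_eq_add_neg, Finset.sum_add_distrib, ereal_neg_sum s hb]

end EReal

section Quantile

open ProbabilityTheory

variable {μ : Measure Ω} [IsProbabilityMeasure μ] {X : Ω → ℝ} {p : ℝ}

lemma nonempty_setOf_le_cdf (ν : Measure ℝ) (hp : p < 1) : {x | p ≤ cdf ν x}.Nonempty :=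
  ((tendsto_cdf_atTop ν).eventually (eventually_ge_nhds hp)).exists

lemma bddBelow_setOf_le_cdf (ν : Measure ℝ) (hp : 0 < p) : BddBelow {x | p ≤ cdf ν x} := by
  obtain ⟨y, hy⟩ := ((tendsto_cdf_atBot ν).eventually (eventually_lt_nhds hp)).exists
  exact ⟨y, fun x hx => ((cdf ν).mono.reflect_lt (hy.trans_le hx)).le⟩

lemma VaRr_eq_sInf_cdf (hX : AEMeasurable X μ) (p : ℝ) :
    VaRr μ X p = sInf {x | p ≤ cdf (μ.map X) x} := by
  have := Measure.isProbabilityMeasure_map hX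
  have hcdf (x : ℝ) : μ {ω | X ω ≤ x} = ENNReal.ofReal (cdf (μ.map X) x) := by
    rw [ofReal_cdf, Measure.map_apply_of_aemeasurable hX measurableSet_Iic]
    rfl
  simp only [VaRr, hcdf, ENNReal.ofReal_le_ofReal_iff (cdf_nonneg _ _)]

lemma VaRr_le_iff (hX : AEMeasurable X μ) (hp : p ∈ Ioo 0 1) (x : ℝ) :
    VaRr μ X p ≤ x ↔ p ≤ cdf (μ.map X) x := by
  have hne := nonempty_setOf_le_cdf (μ.map X) hp.2
  have hbdd := bddBelow_setOf_le_cdf (μ.map X) hp.1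
  rw [VaRr_eq_sInf_cdf hX]
  exact ⟨fun h => (le_apply_csInf_setOf_le hne hbdd ((cdf _).right_continuous _)).trans
    ((cdf _).mono h), fun h => csInf_le hbdd h⟩

lemma monotoneOn_VaRr (hX : AEMeasurable X μ) : MonotoneOn (VaRr μ X) (Ioo 0 1) :=
  fun _ hp _ hq hpq =>
    (VaRr_le_iff hX hp _).2 (hpq.trans ((VaRr_le_iff hX hq _).1 le_rfl))

lemma volume_Ioo_inter_Iic {a b c : ℝ} (hc : c ≤ b) :
    volume (Ioo a b ∩ Iic c) = ENNReal.ofReal (c - a) := by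
  have hIoc : (Ioo a b ∩ Iic c : Set ℝ) =ᵐ[volume] (Ioc a b ∩ Iic c : Set ℝ) :=
    Ioo_ae_eq_Ioc.inter (ae_eq_refl _)
  rw [measure_congr hIoc, Ioc_inter_Iic, min_eq_right hc, Real.volume_Ioc]

lemma identDistrib_VaRr (hX : AEMeasurable X μ) :
    IdentDistrib (VaRr μ X) X (volume.restrict (Ioo 0 1)) μ := by
  have := Measure.isProbabilityMeasure_map hX
  have hmeas : AEMeasurable (VaRr μ X) (volume.restrict (Ioo 0 1)) :=
    aemeasurable_restrict_of_monotoneOn measurableSet_Ioo (monotoneOn_VaRr hX)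
  refine ⟨hmeas, hX, Measure.ext_of_Iic _ _ fun x => ?_⟩
  have hpre : Ioo 0 1 ∩ VaRr μ X ⁻¹' Iic x = Ioo 0 1 ∩ Iic (cdf (μ.map X) x) := by
    ext p
    exact and_congr_right fun hp => VaRr_le_iff hX hp x
  rw [Measure.map_apply_of_aemeasurable hmeas measurableSet_Iic,
    Measure.restrict_apply' measurableSet_Ioo, inter_comm, hpre,
    volume_Ioo_inter_Iic (cdf_le_one _ _), sub_zero, ofReal_cdf]

lemma integrableOn_VaRr (hX : Integrable X μ) : IntegrableOn (VaRr μ X) (Ioo 0 1) :=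
  (identDistrib_VaRr hX.aemeasurable).integrable_iff.2 hX

lemma setIntegral_VaRr_zero_one (hX : AEMeasurable X μ) :
    ∫ q in Ioo 0 1, VaRr μ X q = ∫ ω, X ω ∂μ :=
  (identDistrib_VaRr hX).integral_eq

lemma setIntegral_max_VaRr_sub (hX : AEMeasurable X μ) (x : ℝ) :
    ∫ q in Ioo 0 1, max (VaRr μ X q - x) 0 = ∫ ω, max (X ω - x) 0 ∂μ :=
  ((identDistrib_VaRr hX).comp (u := fun y : ℝ => max (y - x) 0) (by fun_prop)).integral_eq

end Quantile

section ExpectedShortfall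

variable {μ : Measure Ω} [IsProbabilityMeasure μ] {X : Ω → ℝ} {p : ℝ}

lemma setIntegral_VaRr_eq_add (hX : Integrable X μ) (hp0 : 0 ≤ p) (hp1 : p ≤ 1) (x : ℝ) :
    ∫ q in Ioo p 1, VaRr μ X q = (1 - p) * x + ∫ q in Ioo p 1, (VaRr μ X q - x) := by
  have hVaR : IntegrableOn (VaRr μ X) (Ioo p 1) :=
    (integrableOn_VaRr hX).mono_set (Ioo_subset_Ioo_left hp0)
  rw [integral_sub hVaR (integrable_const x)]
  simp [hp1]

lemma setIntegral_VaRr_le (hX : Integrable X μ) (hp0 : 0 ≤ p) (hp1 : p ≤ 1) (x : ℝ) :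
    ∫ q in Ioo p 1, VaRr μ X q ≤ (1 - p) * x + ∫ ω, max (X ω - x) 0 ∂μ := by
  have hsub : Ioo p 1 ⊆ Ioo 0 1 := Ioo_subset_Ioo_left hp0
  have hdiff : IntegrableOn (fun q => VaRr μ X q - x) (Ioo 0 1) :=
    (integrableOn_VaRr hX).sub (integrable_const x)
  have hmax : IntegrableOn (fun q => max (VaRr μ X q - x) 0) (Ioo 0 1) := hdiff.pos_part
  rw [setIntegral_VaRr_eq_add hX hp0 hp1 x, ← setIntegral_max_VaRr_sub hX.aemeasurable x]
  gcongr
  calc ∫ q in Ioo p 1, (VaRr μ X q - x)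
      ≤ ∫ q in Ioo p 1, max (VaRr μ X q - x) 0 :=
        setIntegral_mono (hdiff.mono_set hsub) (hmax.mono_set hsub) fun _ => le_max_left _ _
    _ ≤ ∫ q in Ioo 0 1, max (VaRr μ X q - x) 0 :=
        setIntegral_mono_set hmax (ae_of_all _ fun _ => le_max_right _ _)
          hsub.eventuallyLE

lemma setIntegral_VaRr_eq (hX : Integrable X μ) (hp : p ∈ Ioo 0 1) :
    ∫ q in Ioo p 1, VaRr μ X q =
      (1 - p) * VaRr μ X p + ∫ ω, max (X ω - VaRr μ X p) 0 ∂μ := by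
  have hsub : Ioo p 1 ⊆ Ioo 0 1 := Ioo_subset_Ioo_left hp.1.le
  have hmono := monotoneOn_VaRr hX.aemeasurable
  rw [setIntegral_VaRr_eq_add hX hp.1.le hp.2.le (VaRr μ X p),
    ← setIntegral_max_VaRr_sub hX.aemeasurable]
  congr 1
  calc ∫ q in Ioo p 1, (VaRr μ X q - VaRr μ X p)
      = ∫ q in Ioo p 1, max (VaRr μ X q - VaRr μ X p) 0 :=
        setIntegral_congr_fun measurableSet_Ioo fun q hq =>
          (max_eq_left (sub_nonneg.2 (hmono hp (hsub hq) hq.1.le))).symm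
    _ = ∫ q in Ioo 0 1, max (VaRr μ X q - VaRr μ X p) 0 := by
        refine (setIntegral_eq_of_subset_of_forall_sdiff_eq_zero measurableSet_Ioo hsub ?_).symm
        rintro q ⟨hq, hqp⟩
        have hle : q ≤ p := not_lt.1 fun h => hqp ⟨h, hq.2⟩
        exact max_eq_right (sub_nonpos.2 (hmono hq hp hle))

variable {ι : Type*} {s : Finset ι} {Y : ι → Ω → ℝ}

lemma integral_max_sum_sub_le {ν : Measure Ω} [IsFiniteMeasure ν] (hY : ∀ i ∈ s, Integrable (Y i) ν)
    (x : ι → ℝ) :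
    ∫ ω, max ((∑ i ∈ s, Y i) ω - ∑ i ∈ s, x i) 0 ∂ν ≤
      ∑ i ∈ s, ∫ ω, max (Y i ω - x i) 0 ∂ν := by
  have hdiff : ∀ i ∈ s, Integrable (fun ω => max (Y i ω - x i) 0) ν := fun i hi =>
    ((hY i hi).sub (integrable_const _)).pos_part
  rw [← integral_finsetSum s hdiff]
  refine integral_mono ((integrable_finsetSum' s hY).sub (integrable_const _)).pos_part
    (integrable_finsetSum s hdiff) fun ω => ?_
  simpa only [Finset.sum_apply, Finset.sum_sub_distrib] using
    max_sum_zero_le s fun i => Y i ω - x i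

lemma setIntegral_VaRr_sum_le (hY : ∀ i ∈ s, Integrable (Y i) μ) (hp : p ∈ Ico 0 1) :
    ∫ q in Ioo p 1, VaRr μ (∑ i ∈ s, Y i) q ≤ ∑ i ∈ s, ∫ q in Ioo p 1, VaRr μ (Y i) q := by
  have hsum : Integrable (∑ i ∈ s, Y i) μ := integrable_finsetSum' s hY
  rcases hp.1.eq_or_lt with rfl | hp0
  · -- `VaRr μ (Y i) 0` is the junk value `sInf univ = 0`; but `ES_0` is the mean, which is linear.
    rw [setIntegral_VaRr_zero_one hsum.aemeasurable,
      Finset.sum_congr rfl fun i hi => setIntegral_VaRr_zero_one (hY i hi).aemeasurable,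
      ← integral_finsetSum s hY]
    simp only [Finset.sum_apply, le_refl]
  · calc ∫ q in Ioo p 1, VaRr μ (∑ i ∈ s, Y i) q
        ≤ (1 - p) * ∑ i ∈ s, VaRr μ (Y i) p +
            ∫ ω, max ((∑ i ∈ s, Y i) ω - ∑ i ∈ s, VaRr μ (Y i) p) 0 ∂μ :=
          setIntegral_VaRr_le hsum hp.1 hp.2.le _
      _ ≤ (1 - p) * ∑ i ∈ s, VaRr μ (Y i) p +
            ∑ i ∈ s, ∫ ω, max (Y i ω - VaRr μ (Y i) p) 0 ∂μ := by
          gcongr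
          exact integral_max_sum_sub_le hY _
      _ = ∑ i ∈ s, ∫ q in Ioo p 1, VaRr μ (Y i) q := by
          rw [Finset.mul_sum, ← Finset.sum_add_distrib]
          exact Finset.sum_congr rfl fun i hi => (setIntegral_VaRr_eq (hY i hi) ⟨hp0, hp.2⟩).symm

lemma ES_sum_le (hY : ∀ i ∈ s, Integrable (Y i) μ) (hp : p ∈ Icc 0 1) :
    ES μ (∑ i ∈ s, Y i) p ≤ ∑ i ∈ s, ES μ (Y i) p := by
  rcases hp.2.eq_or_lt with rfl | hp1
  · simpa only [ES, if_true, Finset.sum_apply, ereal_coe_sum] using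
      essSup_sum_le μ s fun i ω => (Y i ω : EReal)
  · simp only [ES, if_neg hp1.ne, ← ereal_coe_sum, ← Finset.mul_sum, EReal.coe_le_coe_iff]
    exact mul_le_mul_of_nonneg_left (setIntegral_VaRr_sum_le hY ⟨hp.1, hp1⟩)
      (inv_nonneg.2 (sub_nonneg.2 hp.2))

lemma adjES_sum_le {g : ι → ℝ → EReal} (hg : ∀ i ∈ s, ∀ p ∈ Icc (0 : ℝ) 1, g i p ≠ ⊥)
    (hY : ∀ i ∈ s, Integrable (Y i) μ) :
    adjES μ (fun p => ∑ i ∈ s, g i p) (∑ i ∈ s, Y i) ≤ ∑ i ∈ s, adjES μ (g i) (Y i) := by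
  refine iSup₂_le fun p hp => ?_
  calc ES μ (∑ i ∈ s, Y i) p - ∑ i ∈ s, g i p
      ≤ ∑ i ∈ s, ES μ (Y i) p - ∑ i ∈ s, g i p := EReal.sub_le_sub (ES_sum_le hY hp) le_rfl
    _ = ∑ i ∈ s, (ES μ (Y i) p - g i p) :=
        (ereal_sum_sub_distrib s _ fun i hi => hg i hi p hp).symm
    _ ≤ ∑ i ∈ s, adjES μ (g i) (Y i) :=
        Finset.sum_le_sum fun i _ =>
          le_iSup₂ (f := fun p (_ : p ∈ Icc (0 : ℝ) 1) => ES μ (Y i) p - g i p) p hp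

end ExpectedShortfall

theorem stmt6_general (μ : Measure Ω) [IsProbabilityMeasure μ] {n : ℕ} (g : Fin n → ℝ → EReal)
    (hg : ∀ i, ∀ p ∈ Icc (0 : ℝ) 1, g i p ≠ ⊥) (X : Ω → ℝ) :
    adjES μ (fun p => ∑ i, g i p) X ≤ infConv μ (fun i => adjES μ (g i)) X := by
  refine le_iInf₂ fun Y ⟨hY, hYX⟩ => ?_
  obtain rfl : ∑ i, Y i = X := funext fun ω => by rw [Finset.sum_apply, hYX]
  exact adjES_sum_le (fun i _ => hg i) fun i _ => hY i

/-- For risk profiles `g_1, …, g_n ∈ 𝒢`, the inf-convolution of the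
adjusted Expected Shortfalls dominates the adjusted Expected Shortfall of the sum:
`(□_{i=1}^n ES^{g_i})(X) ≥ ES^{g_1+⋯+g_n}(X)`. -/
theorem stmt6 (μ : Measure Ω) [IsProbabilityMeasure μ] (hatomless : Atomless μ)
    (n : ℕ) (hn : 0 < n) (g : Fin n → ℝ → EReal) (hg : ∀ i, IsRiskProfile (g i))
    (X : Ω → ℝ) (hX : Integrable X μ) :
    adjES μ (fun p => ∑ i, g i p) X ≤ infConv μ (fun i => adjES μ (g i)) X :=
  stmt6_general μ g (fun i => (hg i).2.1) X
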